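/- (Unitarity of the Griffiths–Racah functions.) Under the stated hypotheses, define for integers n₁, n₂, m₁, m₂ ≥ 0 with n₁+n₂ ≤ N and m₁+m₂ ≤ N: 𝒢_{n₁,n₂}(m₁,m₂) := Σ_{a=0}^{min(N−n₂, N−m₂)} (−1)^{a+m₂} · 𝒫_{n₁}(a; −2j⁽²⁾−1, −2j⁽¹⁾−1, n₂−N−1, N−n₂−2j⁽²⁾+2j⁽³⁾+1) · 𝒫_{n₂}(m₂; −2j⁽⁰⁾−1, −2j⁽⁴⁾−1, a−N−1, N−a−2j⁽⁰⁾−2j⁽¹⁾−1) · 𝒫_{m₁}(a; −2j⁽²⁾−1, −2j⁽⁴⁾−1, m₂−N−1, N−m₂−2j⁽²⁾+2j⁽³⁾+1). Then for all admissible (n₁,n₂), (n₁',n₂'): Σ_{m₁,m₂ ≥ 0, m₁+m₂ ≤ N} 𝒢_{n₁,n₂}(m₁,m₂)·𝒢_{n₁',n₂'}(m₁,m₂) = δ_{n₁,n₁'}·δ_{n₂,n₂'}; and for all admissible (m₁,m₂), (m₁',m₂'): Σ_{n₁,n₂ ≥ 0, n₁+n₂ ≤ N} 𝒢_{n₁,n₂}(m₁,m₂)·𝒢_{n₁,n₂}(m₁',m₂')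 = δ_{m₁,m₁'}·δ_{m₂,m₂'}. -/

import Mathlib

noncomputable section

open Finset Real

/-- Pochhammer symbol `(y)_k = y(y+1)⋯(y+k−1)` for real `y`. -/
def poch (y : ℝ) (k : ℕ) : ℝ := ∏ i ∈ Finset.range k, (y + i)

/-- The terminating Racah function `r_n(m; α, β, −𝒩−1, δ)` on the grid `{0,…,𝒩}`:
`r_n(m) = ∑_{k=0}^{n} (−n)_k (n+α+β+1)_k (−m)_k (m−𝒩+δ)_k /
  ((α+1)_k (β+δ+1)_k (−𝒩)_k k!)`. -/
def racah (𝒩 : ℕ) (α β δ : ℝ) (n m : ℕ) : ℝ :=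
  ∑ k ∈ Finset.range (n + 1),
    (poch (-(n : ℝ)) k * poch ((n : ℝ) + α + β + 1) k * poch (-(m : ℝ)) k *
        poch ((m : ℝ) - (𝒩 : ℝ) + δ) k) /
      (poch (α + 1) k * poch (β + δ + 1) k * poch (-(𝒩 : ℝ)) k * (Nat.factorial k : ℝ))

/-- Coefficient `A_n` of the Racah recurrence relation. -/
def coeffA (𝒩 : ℕ) (α β δ : ℝ) (n : ℕ) : ℝ :=
  ((n : ℝ) + α + 1) * ((n : ℝ) + β + δ + 1) * ((n : ℝ) - (𝒩 : ℝ)) * ((n : ℝ) + α + β + 1) /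
    ((2 * (n : ℝ) + α + β + 1) * (2 * (n : ℝ) + α + β + 2))

/-- Coefficient `C_n` of the Racah recurrence relation. -/
def coeffC (𝒩 : ℕ) (α β δ : ℝ) (n : ℕ) : ℝ :=
  (n : ℝ) * ((n : ℝ) + α + β + (𝒩 : ℝ) + 1) * ((n : ℝ) + α - δ) * ((n : ℝ) + β) /
    ((2 * (n : ℝ) + α + β) * (2 * (n : ℝ) + α + β + 1))

/-- Coefficient `B_m` of the Racah difference relation. -/
def coeffB (𝒩 : ℕ) (α β δ : ℝ) (m : ℕ) : ℝ :=
  ((m : ℝ) + α + 1) * ((m : ℝ) + β + δ + 1) * ((m : ℝ) - (𝒩 : ℝ)) * ((m : ℝ) - (𝒩 : ℝ) + δ) /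
    ((2 * (m : ℝ) - (𝒩 : ℝ) + δ) * (2 * (m : ℝ) - (𝒩 : ℝ) + δ + 1))

/-- Coefficient `D_m` of the Racah difference relation. -/
def coeffD (𝒩 : ℕ) (α β δ : ℝ) (m : ℕ) : ℝ :=
  (m : ℝ) * ((m : ℝ) - (𝒩 : ℝ) - 1 - α + δ) * ((m : ℝ) - (𝒩 : ℝ) - 1 - β) * ((m : ℝ) + δ) /
    ((2 * (m : ℝ) - (𝒩 : ℝ) - 1 + δ) * (2 * (m : ℝ) - (𝒩 : ℝ) + δ))

/-- Normalization constant `κ = (α−δ+1)_𝒩 (β+1)_𝒩 / ((α+β+2)_𝒩 (−δ)_𝒩)`. -/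
def kappa (𝒩 : ℕ) (α β δ : ℝ) : ℝ :=
  poch (α - δ + 1) 𝒩 * poch (β + 1) 𝒩 / (poch (α + β + 2) 𝒩 * poch (-δ) 𝒩)

/-- The orthonormalized Racah function `𝒫_n(m; α, β, −𝒩−1, δ)`. -/
def Pfun (𝒩 : ℕ) (α β δ : ℝ) (n m : ℕ) : ℝ :=
  Real.sqrt (kappa 𝒩 α β δ) *
    (∏ i ∈ Finset.range n,
      coeffA 𝒩 α β δ i / Real.sqrt (coeffA 𝒩 α β δ i * coeffC 𝒩 α β δ (i + 1))) *
    (∏ j ∈ Finset.range m,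
      coeffB 𝒩 α β δ j / Real.sqrt (coeffB 𝒩 α β δ j * coeffD 𝒩 α β δ (j + 1))) *
    racah 𝒩 α β δ n m

/-- The positivity conditions making `𝒫_·(·; α, β, −𝒩−1, δ)` well defined. -/
def PosCond (𝒩 : ℕ) (α β δ : ℝ) : Prop :=
  (∀ i < 𝒩, 0 < coeffA 𝒩 α β δ i * coeffC 𝒩 α β δ (i + 1)) ∧
  (∀ j < 𝒩, 0 < coeffB 𝒩 α β δ j * coeffD 𝒩 α β δ (j + 1)) ∧
  0 < kappa 𝒩 α β δ

/-- The bivariate Griffiths–Racah function `𝒢_{n₁,n₂}(m₁,m₂)`. -/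
def Griffiths (j0 j1 j2 j3 j4 : ℝ) (N : ℕ) (n1 n2 m1 m2 : ℕ) : ℝ :=
  ∑ a ∈ Finset.range (min (N - n2) (N - m2) + 1),
    (-1 : ℝ) ^ (a + m2) *
      Pfun (N - n2) (-2*j2 - 1) (-2*j1 - 1) ((N : ℝ) - n2 - 2*j2 + 2*j3 + 1) n1 a *
      Pfun (N - a) (-2*j0 - 1) (-2*j4 - 1) ((N : ℝ) - a - 2*j0 - 2*j1 - 1) n2 m2 *
      Pfun (N - m2) (-2*j2 - 1) (-2*j4 - 1) ((N : ℝ) - m2 - 2*j2 + 2*j3 + 1) m1 a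

/-!
As functions of the degree `n`, the Racah functions `r_n(m)` are eigenfunctions of a birth–death
operator with distinct eigenvalues for distinct `m`, so Christoffel–Darboux summation makes them
orthogonal. Exchanging degree and variable turns Racah functions into Racah functions, which gives
orthogonality in the other index as well. A matrix whose rows and whose columns are orthogonal
systems is an orthogonal matrix as soon as one column without zero entries is normalized; for the
column `m = 0` this is a terminating very-well-poised `₅F₄` summation. Finally `𝒢` is a product of
three orthogonal matrices on the triangle `i + j ≤ N`, each block diagonal along one family of lines
with Racah matrices as blocks.
-/

open scoped Matrix

theorem poch_zero (y : ℝ) : poch y 0 = 1 := prod_range_zero _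

theorem poch_succ (y : ℝ) (k : ℕ) : poch y (k + 1) = poch y k * (y + k) := prod_range_succ _ k

theorem poch_succ_left (y : ℝ) (k : ℕ) : poch y (k + 1) = y * poch (y + 1) k := by
  simp only [poch, prod_range_succ', Nat.cast_succ, Nat.cast_zero, add_zero, mul_comm y]
  congr! 2
  ring

theorem poch_neg_natCast_eq_zero {n k : ℕ} (h : n < k) : poch (-n) k = 0 :=
  prod_eq_zero (mem_range.2 h) (neg_add_cancel _)

theorem poch_reflect (y : ℝ) (k : ℕ) : poch (1 - k - y) k = (-1) ^ k * poch y k := by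
  induction k with
  | zero => rw [poch_zero, poch_zero, pow_zero, one_mul]
  | succ k ih =>
    rw [poch_succ_left, Nat.cast_succ, show 1 - ((k : ℝ) + 1) - y + 1 = 1 - k - y by ring, ih,
      poch_succ]
    ring

/-- The product `(-x)_k (x+a)_k`, a polynomial of degree `k` in `x (x + a)`; the Racah functions are
built from such products both in the degree and in the variable. -/
def pochPair (a x : ℝ) (k : ℕ) : ℝ := poch (-x) k * poch (x + a) k

theorem pochPair_zero (a x : ℝ) : pochPair a x 0 = 1 := by
  rw [pochPair, poch_zero, poch_zero, one_mul]

theorem pochPair_succ (a x : ℝ) (k : ℕ) :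
    pochPair a x (k + 1) = (k * (k + a) - x * (x + a)) * pochPair a x k := by
  rw [pochPair, pochPair, poch_succ, poch_succ]
  ring

theorem pochPair_natCast_eq_zero (a : ℝ) {n k : ℕ} (h : n < k) : pochPair a n k = 0 := by
  rw [pochPair, poch_neg_natCast_eq_zero h, zero_mul]

theorem mul_pochPair_add_one_sub (a x : ℝ) (k : ℕ) :
    (x + a) * (pochPair a (x + 1) (k + 1) - pochPair a x (k + 1)) =
      -(k + 1) * (2 * x + a + 1) * (x + a + k) * pochPair a x k := by
  have lower : poch (-(x + 1)) (k + 1) = -(x + 1) * poch (-x) k := by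
    rw [poch_succ_left, neg_add_rev, neg_add_cancel_comm]
  have upper : (x + a) * poch (x + 1 + a) k = poch (x + a) k * (x + a + k) := by
    rw [add_right_comm, ← poch_succ_left, poch_succ]
  rw [pochPair_succ a x, pochPair, pochPair, lower, poch_succ (x + 1 + a)]
  linear_combination (-(x + 1) * poch (-x) k * (x + 1 + a + k)) * upper

theorem mul_pochPair_sub_one_sub (a x : ℝ) (k : ℕ) :
    x * (pochPair a (x - 1) (k + 1) - pochPair a x (k + 1)) =
      (k + 1) * (2 * x + a - 1) * (x - k) * pochPair a x k := by
  have upper : poch (x - 1 + a) (k + 1) = (x - 1 + a) * poch (x + a) k := by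
    rw [poch_succ_left, sub_add_eq_add_sub, sub_add_cancel]
  have lower : -x * poch (-(x - 1)) k = poch (-x) k * (-x + k) := by
    rw [neg_sub', sub_neg_eq_add, ← poch_succ_left, poch_succ]
  rw [pochPair_succ a x, pochPair, pochPair, upper, poch_succ (-(x - 1))]
  linear_combination (-(x - 1 + a) * poch (x + a) k * (-(x - 1) + k)) * lower

/-! ### Birth–death operators -/

/-- The generator `f ↦ A (f(· + 1) - f) + C (f(· - 1) - f)` of a birth–death chain on `ℕ`. It is
meant for `C 0 = 0`, in which case the truncated `0 - 1 = 0` is harmless. -/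
def birthDeathOp (A C f : ℕ → ℝ) (n : ℕ) : ℝ :=
  A n * (f (n + 1) - f n) + C n * (f (n - 1) - f n)

theorem birthDeathOp_sum (A C : ℕ → ℝ) (s : Finset ℕ) (c : ℕ → ℝ) (f : ℕ → ℕ → ℝ) (n : ℕ) :
    birthDeathOp A C (fun n => ∑ k ∈ s, c k * f k n) n =
      ∑ k ∈ s, c k * birthDeathOp A C (f k) n := by
  simp only [birthDeathOp, ← sum_sub_distrib, mul_sum, ← sum_add_distrib]
  exact sum_congr rfl fun k _ => by ring

/-- The reversible measure `w_n = ∏_{i<n} A_i / C_{i+1}` of `birthDeathOp A C`. -/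
def birthDeathWeight (A C : ℕ → ℝ) (n : ℕ) : ℝ := ∏ i ∈ range n, A i / C (i + 1)

theorem birthDeathWeight_succ_mul (A : ℕ → ℝ) {C : ℕ → ℝ} {n : ℕ} (hC : C (n + 1) ≠ 0) :
    birthDeathWeight A C (n + 1) * C (n + 1) = birthDeathWeight A C n * A n := by
  rw [birthDeathWeight, prod_range_succ, mul_assoc, div_mul_cancel₀ _ hC, birthDeathWeight]

theorem christoffel_darboux {A C f g : ℕ → ℝ} {x y : ℝ} {K : ℕ} (hC0 : C 0 = 0)
    (hC : ∀ i < K, C (i + 1) ≠ 0) (hf : ∀ n ≤ K, birthDeathOp A C f n = x * f n)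
    (hg : ∀ n ≤ K, birthDeathOp A C g n = y * g n) :
    (x - y) * ∑ n ∈ range (K + 1), birthDeathWeight A C n * (f n * g n) =
      birthDeathWeight A C K * A K * (f (K + 1) * g K - f K * g (K + 1)) := by
  simp only [birthDeathOp] at hf hg
  induction K with
  | zero =>
    have hf0 := hf 0 le_rfl
    have hg0 := hg 0 le_rfl
    simp only [hC0, birthDeathWeight, zero_add, sum_range_one, prod_range_zero] at hf0 hg0 ⊢
    linear_combination f 0 * hg0 - g 0 * hf0
  | succ K ih =>
    have hfK := hf (K + 1) le_rfl
    have hgK := hg (K + 1) le_rfl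
    rw [sum_range_succ, mul_add, ih (fun i hi => hC i (hi.trans K.lt_succ_self))
      (fun n hn => hf n (hn.trans K.le_succ)) (fun n hn => hg n (hn.trans K.le_succ))]
    simp only [Nat.add_sub_cancel] at hfK hgK
    linear_combination birthDeathWeight A C (K + 1) * (f (K + 1) * hgK - g (K + 1) * hfK)
      + (f K * g (K + 1) - f (K + 1) * g K) *
        birthDeathWeight_succ_mul A (hC K K.lt_succ_self)

theorem sum_birthDeathWeight_mul_eq_zero {A C f g : ℕ → ℝ} {x y : ℝ} {K : ℕ} (hC0 : C 0 = 0)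
    (hAK : A K = 0) (hC : ∀ i < K, C (i + 1) ≠ 0)
    (hf : ∀ n ≤ K, birthDeathOp A C f n = x * f n)
    (hg : ∀ n ≤ K, birthDeathOp A C g n = y * g n) (hxy : x ≠ y) :
    ∑ n ∈ range (K + 1), birthDeathWeight A C n * (f n * g n) = 0 := by
  have h := christoffel_darboux hC0 hC hf hg
  rw [hAK, mul_zero, zero_mul] at h
  exact (mul_eq_zero.1 h).resolve_left (sub_ne_zero.2 hxy)

/-- The square root `∏_{i<n} A_i / √(A_i C_{i+1})` of `birthDeathWeight A C n` occurring in `Pfun`;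
its factors carry the sign of `A_i`. -/
def birthDeathRoot (A C : ℕ → ℝ) (n : ℕ) : ℝ := ∏ i ∈ range n, A i / √(A i * C (i + 1))

theorem birthDeathRoot_zero (A C : ℕ → ℝ) : birthDeathRoot A C 0 = 1 := prod_range_zero _

theorem birthDeathRoot_mul_self {A C : ℕ → ℝ} {n : ℕ} (h : ∀ i < n, 0 < A i * C (i + 1)) :
    birthDeathRoot A C n * birthDeathRoot A C n = birthDeathWeight A C n := by
  rw [birthDeathRoot, birthDeathWeight, ← prod_mul_distrib]
  refine prod_congr rfl fun i hi => ?_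
  have hpos := h i (mem_range.1 hi)
  rw [div_mul_div_comm, mul_self_sqrt hpos.le, mul_div_mul_left _ _ (left_ne_zero_of_mul hpos.ne')]

theorem birthDeathRoot_ne_zero {A C : ℕ → ℝ} {n : ℕ} (h : ∀ i < n, 0 < A i * C (i + 1)) :
    birthDeathRoot A C n ≠ 0 :=
  prod_ne_zero_iff.2 fun i hi =>
    have hpos := h i (mem_range.1 hi)
    div_ne_zero (left_ne_zero_of_mul hpos.ne') (sqrt_pos.2 hpos).ne'

/-! ### Racah functions as eigenfunctions, and their duality -/

/- Here `Lθ k` stands for `L (θ k)` with an operator `L` that is bidiagonal on the `θ k`: up to a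
boundary term, `∑ k, c k * φ k * θ k` is then an eigenvector of `L`. -/
theorem sum_mul_bidiagonal {c θ Lθ φ μ e : ℕ → ℝ} {x : ℝ} {K : ℕ}
    (hc : ∀ k < K, c (k + 1) * e k = c k) (hL0 : Lθ 0 = μ 0 * θ 0)
    (hL : ∀ k, Lθ (k + 1) = μ (k + 1) * θ (k + 1) - e k * θ k)
    (hφ : ∀ k, φ (k + 1) = (μ k - x) * φ k) :
    ∑ k ∈ range (K + 1), c k * φ k * Lθ k =
      x * ∑ k ∈ range (K + 1), c k * φ k * θ k + c K * φ (K + 1) * θ K := by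
  induction K with
  | zero =>
    rw [zero_add, sum_range_one, sum_range_one, hL0, hφ 0]
    ring
  | succ K ih =>
    rw [sum_range_succ, ih fun k hk => hc k (hk.trans K.lt_succ_self), sum_range_succ _ (K + 1),
      hL, hφ (K + 1)]
    linear_combination (-φ (K + 1) * θ K) * hc K K.lt_succ_self

section Racah

variable {𝒩 : ℕ} {α β δ : ℝ}

/-- Nonvanishing of the off-diagonal products of the Racah recurrence. For `𝒩 > 0` this excludes the
parameters at which a denominator vanishes, because `x / 0 = 0`. -/
def RacahRegular (𝒩 : ℕ) (α β δ : ℝ) : Prop :=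
  ∀ i < 𝒩, coeffA 𝒩 α β δ i * coeffC 𝒩 α β δ (i + 1) ≠ 0

namespace RacahRegular

theorem factors_ne_zero (h : RacahRegular 𝒩 α β δ) {i : ℕ} (hi : i < 𝒩) :
    α + 1 + i ≠ 0 ∧ β + δ + 1 + i ≠ 0 ∧ β + 1 + i ≠ 0 ∧ α - δ + 1 + i ≠ 0 := by
  have hAC := h i hi
  simp only [coeffA, coeffC, mul_ne_zero_iff, div_ne_zero_iff, Nat.cast_succ] at hAC
  obtain ⟨⟨⟨⟨⟨hα, hβδ⟩, -⟩, -⟩, -⟩, ⟨⟨⟨-, -⟩, hαδ⟩, hβ⟩, -⟩ := hAC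
  refine ⟨?_, ?_, ?_, ?_⟩
  · convert hα using 1; ring
  · convert hβδ using 1; ring
  · convert hβ using 1; ring
  · convert hαδ using 1; ring

theorem natCast_add_ne_zero (h : RacahRegular 𝒩 α β δ) (hN : 0 < 𝒩) {k : ℕ} (hk : k ≤ 2 * 𝒩) :
    k + α + β + 1 ≠ 0 := by
  obtain ⟨i, hi, hki⟩ : ∃ i < 𝒩, k = 2 * i ∨ k = 2 * i + 1 ∨ k = 2 * (i + 1) :=
    ⟨min (k / 2) (𝒩 - 1), by omega, by omega⟩
  have hAC := h i hi
  simp only [coeffA, coeffC, mul_ne_zero_iff, div_ne_zero_iff, Nat.cast_succ] at hAC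
  obtain ⟨⟨-, hA₁, hA₂⟩, -, -, hC⟩ := hAC
  rcases hki with rfl | rfl | rfl
  · exact_mod_cast hA₁
  · convert hA₂ using 1; push_cast; ring
  · exact_mod_cast hC

end RacahRegular

theorem coeffA_mul_pochPair_sub (h : RacahRegular 𝒩 α β δ) {n : ℕ} (hn : n ≤ 𝒩) (k : ℕ) :
    (2 * n + α + β + 1) * (coeffA 𝒩 α β δ n *
        (pochPair (α + β + 1) (n + 1) (k + 1) - pochPair (α + β + 1) n (k + 1))) =
      -(k + 1) * (n + α + 1) * (n + β + δ + 1) * (n - 𝒩) * (n + α + β + 1 + k) *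
        pochPair (α + β + 1) n k := by
  rcases hn.eq_or_lt with rfl | hlt
  · simp only [coeffA, sub_self, mul_zero, zero_mul, zero_div]
  have h₀ : 2 * (n : ℝ) + α + β + 1 ≠ 0 := by
    exact_mod_cast h.natCast_add_ne_zero (by omega) (k := 2 * n) (by omega)
  have h₁ : 2 * (n : ℝ) + α + β + 2 ≠ 0 := by
    have := h.natCast_add_ne_zero (by omega) (k := 2 * n + 1) (by omega)
    push_cast at this
    convert this using 1; ring
  rw [coeffA, div_mul_eq_mul_div, mul_div_assoc', div_eq_iff (mul_ne_zero h₀ h₁)]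
  linear_combination (2 * n + α + β + 1) * (n + α + 1) * (n + β + δ + 1) * (n - 𝒩) *
    mul_pochPair_add_one_sub (α + β + 1) n k

theorem coeffC_mul_pochPair_sub (h : RacahRegular 𝒩 α β δ) {n : ℕ} (hn : n ≤ 𝒩) (k : ℕ) :
    (2 * n + α + β + 1) * (coeffC 𝒩 α β δ n *
        (pochPair (α + β + 1) (n - 1 : ℕ) (k + 1) - pochPair (α + β + 1) n (k + 1))) =
      (k + 1) * (n + α + β + 𝒩 + 1) * (n + α - δ) * (n + β) * (n - k) *
        pochPair (α + β + 1) n k := by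
  rcases n.eq_zero_or_pos with rfl | hpos
  · rcases k.eq_zero_or_pos with rfl | hk
    · simp [coeffC]
    · rw [pochPair_natCast_eq_zero _ hk]
      simp [coeffC]
  have h₀ : 2 * (n : ℝ) + α + β + 1 ≠ 0 := by
    exact_mod_cast h.natCast_add_ne_zero (by omega) (k := 2 * n) (by omega)
  have h₁ : 2 * (n : ℝ) + α + β ≠ 0 := by
    have := h.natCast_add_ne_zero (by omega) (k := 2 * n - 1) (by omega)
    push_cast [Nat.cast_sub (show 1 ≤ 2 * n by omega)] at this
    convert this using 1; ring
  rw [Nat.cast_pred hpos, coeffC, div_mul_eq_mul_div, mul_div_assoc',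
    div_eq_iff (mul_ne_zero h₁ h₀)]
  linear_combination (2 * n + α + β + 1) * (n + α + β + 𝒩 + 1) * (n + α - δ) * (n + β) *
    mul_pochPair_sub_one_sub (α + β + 1) n k

theorem birthDeathOp_pochPair_succ (hN : 0 < 𝒩) (h : RacahRegular 𝒩 α β δ) {n : ℕ} (hn : n ≤ 𝒩)
    (k : ℕ) :
    birthDeathOp (coeffA 𝒩 α β δ) (coeffC 𝒩 α β δ) (fun n => pochPair (α + β + 1) n (k + 1)) n =
      (k + 1 : ℕ) * ((k + 1 : ℕ) + (δ - 𝒩)) * pochPair (α + β + 1) n (k + 1) -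
        (α + 1 + k) * (β + δ + 1 + k) * (-𝒩 + k) * (k + 1) * pochPair (α + β + 1) n k := by
  have hden : 2 * (n : ℝ) + α + β + 1 ≠ 0 := by
    exact_mod_cast h.natCast_add_ne_zero hN (k := 2 * n) (by omega)
  refine mul_left_cancel₀ hden ?_
  rw [birthDeathOp, Nat.cast_succ, mul_add, coeffA_mul_pochPair_sub h hn,
    coeffC_mul_pochPair_sub h hn, pochPair_succ]
  push_cast
  ring

/-- The coefficient `1 / ((α+1)_k (β+δ+1)_k (-𝒩)_k k!)` of the hypergeometric series `racah`. -/
def racahCoeff (𝒩 : ℕ) (α β δ : ℝ) (k : ℕ) : ℝ :=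
  (poch (α + 1) k * poch (β + δ + 1) k * poch (-𝒩) k * k.factorial)⁻¹

theorem racahCoeff_succ_mul (h : RacahRegular 𝒩 α β δ) {k : ℕ} (hk : k < 𝒩) :
    racahCoeff 𝒩 α β δ (k + 1) * ((α + 1 + k) * (β + δ + 1 + k) * (-𝒩 + k) * (k + 1)) =
      racahCoeff 𝒩 α β δ k := by
  obtain ⟨hα, hβδ, -⟩ := h.factors_ne_zero hk
  have hk𝒩 : -(𝒩 : ℝ) + k ≠ 0 := by
    rw [neg_add_eq_sub]
    exact sub_ne_zero.2 (Nat.cast_injective.ne hk.ne)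
  have hfactor : (α + 1 + k) * (β + δ + 1 + k) * (-𝒩 + k) * (k + 1) ≠ 0 := by positivity
  rw [← eq_mul_inv_iff_mul_eq₀ hfactor, racahCoeff, racahCoeff, ← mul_inv]
  simp only [poch_succ, Nat.factorial_succ, Nat.cast_mul, Nat.cast_succ]
  ring

theorem racah_eq_sum (𝒩 : ℕ) (α β δ : ℝ) (n : ℕ) {m K : ℕ} (hm : m ≤ K) :
    racah 𝒩 α β δ n m = ∑ k ∈ range (K + 1),
      racahCoeff 𝒩 α β δ k * pochPair (δ - 𝒩) m k * pochPair (α + β + 1) n k := by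
  refine sum_congr_of_eq_on_inter (fun k _ hk => ?_) (fun k _ hk => ?_) (fun k _ _ => ?_)
  · rw [poch_neg_natCast_eq_zero (n := m) (by grind), mul_zero, zero_mul, zero_div]
  · rw [pochPair_natCast_eq_zero (n := n) _ (by grind), mul_zero]
  · rw [racahCoeff, pochPair, pochPair, add_sub_left_comm, add_comm δ, ← add_assoc (n : ℝ),
      ← add_assoc (n : ℝ)]
    ring

theorem racah_zero_right (𝒩 : ℕ) (α β δ : ℝ) (n : ℕ) : racah 𝒩 α β δ n 0 = 1 := by
  rw [racah_eq_sum 𝒩 α β δ n le_rfl, zero_add, sum_range_one]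
  simp [racahCoeff, pochPair_zero, poch_zero]

theorem birthDeathOp_racah (hN : 0 < 𝒩) (h : RacahRegular 𝒩 α β δ) {n m : ℕ} (hn : n ≤ 𝒩)
    (hm : m ≤ 𝒩) :
    birthDeathOp (coeffA 𝒩 α β δ) (coeffC 𝒩 α β δ) (fun n => racah 𝒩 α β δ n m) n =
      m * (m + (δ - 𝒩)) * racah 𝒩 α β δ n m := by
  simp only [racah_eq_sum 𝒩 α β δ _ hm]
  rw [birthDeathOp_sum, sum_mul_bidiagonal (fun k hk => racahCoeff_succ_mul h hk)
    (μ := fun k => k * (k + (δ - 𝒩))) (by simp [birthDeathOp, pochPair_zero])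
    (birthDeathOp_pochPair_succ hN h hn) (pochPair_succ (δ - 𝒩) m),
    pochPair_natCast_eq_zero _ (Nat.lt_succ_of_le hm), mul_zero, zero_mul, add_zero]

/-- The parameter replacing `β` when degree and variable of a Racah function are exchanged; it is
chosen so that `α + dualBeta + 1 = δ - 𝒩`. -/
def dualBeta (𝒩 : ℕ) (α δ : ℝ) : ℝ := δ - 𝒩 - 1 - α

/-- The parameter replacing `δ` when degree and variable of a Racah function are exchanged; it is
chosen so that `dualDelta - 𝒩 = α + β + 1`. -/
def dualDelta (𝒩 : ℕ) (α β : ℝ) : ℝ := 𝒩 + α + β + 1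

variable (𝒩 α β δ)

theorem racah_dual {n m : ℕ} (hn : n ≤ 𝒩) (hm : m ≤ 𝒩) :
    racah 𝒩 α (dualBeta 𝒩 α δ) (dualDelta 𝒩 α β) m n = racah 𝒩 α β δ n m := by
  have hβδ : dualBeta 𝒩 α δ + dualDelta 𝒩 α β = β + δ := by unfold dualBeta dualDelta; ring
  have hβ : α + dualBeta 𝒩 α δ + 1 = δ - 𝒩 := by unfold dualBeta; ring
  have hδ : dualDelta 𝒩 α β - 𝒩 = α + β + 1 := by unfold dualDelta; ring
  rw [racah_eq_sum _ _ _ _ _ hn, racah_eq_sum _ _ _ _ _ hm, hβ, hδ]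
  simp only [racahCoeff, hβδ]
  exact sum_congr rfl fun k _ => mul_right_comm _ _ _

theorem coeffA_dual : coeffA 𝒩 α (dualBeta 𝒩 α δ) (dualDelta 𝒩 α β) = coeffB 𝒩 α β δ := by
  ext m
  unfold coeffA coeffB dualBeta dualDelta
  congr 1 <;> ring

theorem coeffC_dual : coeffC 𝒩 α (dualBeta 𝒩 α δ) (dualDelta 𝒩 α β) = coeffD 𝒩 α β δ := by
  ext m
  unfold coeffC coeffD dualBeta dualDelta
  congr 1 <;> ring

theorem coeffB_dual : coeffB 𝒩 α (dualBeta 𝒩 α δ) (dualDelta 𝒩 α β) = coeffA 𝒩 α β δ := by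
  ext m
  unfold coeffA coeffB dualBeta dualDelta
  congr 1 <;> ring

theorem coeffD_dual : coeffD 𝒩 α (dualBeta 𝒩 α δ) (dualDelta 𝒩 α β) = coeffC 𝒩 α β δ := by
  ext m
  unfold coeffC coeffD dualBeta dualDelta
  congr 1 <;> ring

theorem kappa_dual : kappa 𝒩 α (dualBeta 𝒩 α δ) (dualDelta 𝒩 α β) = kappa 𝒩 α β δ := by
  have hβ : α - dualDelta 𝒩 α β + 1 = 1 - 𝒩 - (β + 1) := by unfold dualDelta; ring
  have hαδ : dualBeta 𝒩 α δ + 1 = 1 - 𝒩 - (α - δ + 1) := by unfold dualBeta; ring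
  have hδ : α + dualBeta 𝒩 α δ + 2 = 1 - 𝒩 - -δ := by unfold dualBeta; ring
  have hαβ : -dualDelta 𝒩 α β = 1 - 𝒩 - (α + β + 2) := by unfold dualDelta; ring
  have hsign : (-1 : ℝ) ^ 𝒩 * (-1) ^ 𝒩 ≠ 0 := by positivity
  rw [kappa, hβ, hαδ, hδ, hαβ, poch_reflect, poch_reflect, poch_reflect, poch_reflect,
    mul_mul_mul_comm, mul_mul_mul_comm _ (poch (-δ) 𝒩), mul_div_mul_left _ _ hsign, kappa,
    mul_comm (poch (β + 1) 𝒩), mul_comm (poch (-δ) 𝒩)]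

variable {𝒩 α β δ}

theorem PosCond.dual (h : PosCond 𝒩 α β δ) :
    PosCond 𝒩 α (dualBeta 𝒩 α δ) (dualDelta 𝒩 α β) := by
  obtain ⟨hAC, hBD, hκ⟩ := h
  unfold PosCond
  rw [coeffA_dual, coeffC_dual, coeffB_dual, coeffD_dual, kappa_dual]
  exact ⟨hBD, hAC, hκ⟩

theorem PosCond.racahRegular (h : PosCond 𝒩 α β δ) : RacahRegular 𝒩 α β δ :=
  fun i hi => (h.1 i hi).ne'

theorem Pfun_eq (𝒩 : ℕ) (α β δ : ℝ) (n m : ℕ) :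
    Pfun 𝒩 α β δ n m = √(kappa 𝒩 α β δ) * birthDeathRoot (coeffA 𝒩 α β δ) (coeffC 𝒩 α β δ) n *
      birthDeathRoot (coeffB 𝒩 α β δ) (coeffD 𝒩 α β δ) m * racah 𝒩 α β δ n m := rfl

theorem Pfun_dual (𝒩 : ℕ) (α β δ : ℝ) {n m : ℕ} (hn : n ≤ 𝒩) (hm : m ≤ 𝒩) :
    Pfun 𝒩 α (dualBeta 𝒩 α δ) (dualDelta 𝒩 α β) m n = Pfun 𝒩 α β δ n m := by
  rw [Pfun_eq, Pfun_eq, racah_dual 𝒩 α β δ hn hm, coeffA_dual, coeffC_dual, coeffB_dual,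
    coeffD_dual, kappa_dual, mul_right_comm √_]

end Racah

/-! ### A terminating very-well-poised sum -/

/-- The term `(a)_n (b)_n (c)_n / (n! (1+a-b)_n (1+a-c)_n)` of a well-poised hypergeometric
series. -/
def wellPoisedTerm (a b c : ℝ) (n : ℕ) : ℝ :=
  poch a n * poch b n * poch c n / (n.factorial * poch (1 + a - b) n * poch (1 + a - c) n)

section WellPoised

variable {a b c : ℝ}

theorem wellPoisedTerm_succ_mul {n : ℕ} (hb : 1 + a - b + n ≠ 0) (hc : 1 + a - c + n ≠ 0) :
    wellPoisedTerm a b c (n + 1) * ((n + 1) * (1 + a - b + n) * (1 + a - c + n)) =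
      wellPoisedTerm a b c n * ((a + n) * (b + n) * (c + n)) := by
  have hfactor : ((n : ℝ) + 1) * (1 + a - b + n) * (1 + a - c + n) ≠ 0 := by positivity
  rw [← eq_div_iff hfactor, wellPoisedTerm, wellPoisedTerm, div_mul_eq_mul_div, div_div]
  simp only [poch_succ, Nat.factorial_succ, Nat.cast_mul, Nat.cast_succ]
  congr 1 <;> ring

/-- The term of the very-well-poised series `₅F₄` with numerator parameters `a, 1 + a/2, b, c, -x`,
multiplied by `a`. -/
def veryWellPoisedTerm (a b c x : ℝ) (n : ℕ) : ℝ :=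
  (a + 2 * n) * wellPoisedTerm a b c n * (poch (-x) n / poch (a + x + 1) n)

theorem veryWellPoisedTerm_succ_mul {x : ℝ} {n : ℕ} (hb : 1 + a - b + n ≠ 0)
    (hc : 1 + a - c + n ≠ 0) (hx : a + x + 1 + n ≠ 0) :
    veryWellPoisedTerm a b c x (n + 1) *
        ((a + 2 * n) * ((n + 1) * (1 + a - b + n) * (1 + a - c + n) * (a + x + 1 + n))) =
      veryWellPoisedTerm a b c x n *
        ((a + 2 * (n + 1)) * ((a + n) * (b + n) * (c + n) * (-x + n))) := by
  have ratio : poch (-x) (n + 1) / poch (a + x + 1) (n + 1) * (a + x + 1 + n) =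
      poch (-x) n / poch (a + x + 1) n * (-x + n) := by
    rw [poch_succ, poch_succ, mul_div_mul_comm, mul_assoc, div_mul_cancel₀ _ hx]
  rw [veryWellPoisedTerm, veryWellPoisedTerm, Nat.cast_succ]
  linear_combination (a + 2 * n) * (a + 2 * (n + 1)) *
    (poch (-x) (n + 1) / poch (a + x + 1) (n + 1) * (a + x + 1 + n) *
        wellPoisedTerm_succ_mul hb hc +
      wellPoisedTerm a b c n * ((a + n) * (b + n) * (c + n)) * ratio)

/- The contiguous relation in `x` telescopes: the right-hand side is the certificate of a
Wilf–Zeilberger pair, and it vanishes for `x = N` and `K = N + 1`. -/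
theorem sum_veryWellPoisedTerm_contiguous {x : ℝ} {K : ℕ} (hx : a + x + 1 ≠ 0)
    (ha : ∀ i < K, a + x + 2 + i ≠ 0) (hb : ∀ i < K, 1 + a - b + i ≠ 0)
    (hc : ∀ i < K, 1 + a - c + i ≠ 0) :
    (1 + a - b + x) * (1 + a - c + x) * ∑ n ∈ range (K + 1), veryWellPoisedTerm a b c (x + 1) n -
        (a + x + 1) * (1 + a - b - c + x) * ∑ n ∈ range (K + 1), veryWellPoisedTerm a b c x n =
      wellPoisedTerm a b c K * ((a + K) * (b + K) * (c + K)) *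
        (poch (-x) K / poch (a + x + 2) K) := by
  induction K with
  | zero =>
    simp only [zero_add, sum_range_one, veryWellPoisedTerm, wellPoisedTerm, poch_zero]
    norm_num
    ring
  | succ K ih =>
    have ihK := ih (fun i hi => ha i (hi.trans K.lt_succ_self))
      (fun i hi => hb i (hi.trans K.lt_succ_self)) (fun i hi => hc i (hi.trans K.lt_succ_self))
    have haK := ha K K.lt_succ_self
    have lower : poch (-(x + 1)) (K + 1) = -(x + 1) * poch (-x) K := by
      rw [poch_succ_left, neg_add_rev, neg_add_cancel_comm]
    have upper : poch (a + x + 1) (K + 1) = (a + x + 1) * poch (a + x + 2) K := by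
      rw [poch_succ_left, add_assoc (a + x), one_add_one_eq_two]
    rw [← wellPoisedTerm_succ_mul (hb K K.lt_succ_self) (hc K K.lt_succ_self)] at ihK
    have increment :
        (1 + a - b + x) * (1 + a - c + x) * veryWellPoisedTerm a b c (x + 1) (K + 1) -
            (a + x + 1) * (1 + a - b - c + x) * veryWellPoisedTerm a b c x (K + 1) =
          wellPoisedTerm a b c (K + 1) *
            ((a + (K + 1 : ℕ)) * (b + (K + 1 : ℕ)) * (c + (K + 1 : ℕ)) *
                (poch (-x) (K + 1) / poch (a + x + 2) (K + 1)) -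
              (K + 1) * (1 + a - b + K) * (1 + a - c + K) *
                (poch (-x) K / poch (a + x + 2) K)) := by
      simp only [veryWellPoisedTerm, lower, upper, poch_succ (-x), Nat.cast_succ,
        show a + (x + 1) + 1 = a + x + 2 by ring, poch_succ (a + x + 2)]
      field_simp
      ring
    rw [sum_range_succ, sum_range_succ (veryWellPoisedTerm a b c x)]
    linear_combination ihK + increment

theorem sum_veryWellPoisedTerm {N : ℕ} (ha : ∀ i < 2 * N, a + 1 + i ≠ 0)
    (hb : ∀ i < N, 1 + a - b + i ≠ 0) (hc : ∀ i < N, 1 + a - c + i ≠ 0) :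
    ∑ n ∈ range (N + 1), veryWellPoisedTerm a b c N n =
      poch a (N + 1) * poch (1 + a - b - c) N / (poch (1 + a - b) N * poch (1 + a - c) N) := by
  induction N with
  | zero => simp [veryWellPoisedTerm, wellPoisedTerm, poch_zero, poch_succ]
  | succ N ih =>
    have haN (k : ℕ) (hk : k < N + 2) : a + N + 1 + k ≠ 0 := by
      convert ha (N + k) (by omega) using 1; push_cast; ring
    have contiguous := sum_veryWellPoisedTerm_contiguous (x := N) (K := N + 1)
      (by simpa using haN 0 (by omega))
      (fun i hi => by convert haN (i + 1) (by omega) using 1; push_cast; ring) hb hc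
    have last : veryWellPoisedTerm a b c N (N + 1) = 0 := by
      rw [veryWellPoisedTerm, poch_neg_natCast_eq_zero N.lt_succ_self, zero_div, mul_zero]
    rw [poch_neg_natCast_eq_zero N.lt_succ_self, zero_div, mul_zero, sub_eq_zero,
      sum_range_succ (veryWellPoisedTerm a b c N), last, add_zero,
      ih (fun i hi => ha i (by omega)) (fun i hi => hb i (by omega))
        (fun i hi => hc i (by omega))] at contiguous
    have hbN := hb N N.lt_succ_self
    have hcN := hc N N.lt_succ_self
    rw [Nat.cast_succ, eq_div_of_mul_eq (mul_ne_zero hbN hcN) ((mul_comm _ _).trans contiguous),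
      poch_succ _ (N + 1), poch_succ (1 + a - b - c), poch_succ (1 + a - b), poch_succ (1 + a - c),
      mul_div_assoc', div_div, Nat.cast_succ]
    congr 1 <;> ring

end WellPoised

section Racah

variable {𝒩 : ℕ} {α β δ : ℝ}

theorem coeffA_mul_eq_coeffC_succ_mul (h : RacahRegular 𝒩 α β δ) {n : ℕ} (hn : n < 𝒩) :
    coeffA 𝒩 α β δ n * ((α + β + 1 + 2 * n) *
        ((n + 1) * (1 + (α + β + 1) - (α + 1) + n) * (1 + (α + β + 1) - (β + δ + 1) + n) *
          (α + β + 1 + 𝒩 + 1 + n))) =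
      coeffC 𝒩 α β δ (n + 1) * ((α + β + 1 + 2 * (n + 1)) *
        ((α + β + 1 + n) * (α + 1 + n) * (β + δ + 1 + n) * (-𝒩 + n))) := by
  have hA : coeffA 𝒩 α β δ n = (α + β + 1 + n) * (α + 1 + n) * (β + δ + 1 + n) * (-𝒩 + n) /
      ((α + β + 1 + 2 * n) * (α + β + 1 + 2 * n + 1)) := by
    rw [coeffA]
    congr 1 <;> ring
  have hC : coeffC 𝒩 α β δ (n + 1) =
      (n + 1) * (1 + (α + β + 1) - (α + 1) + n) * (1 + (α + β + 1) - (β + δ + 1) + n) *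
        (α + β + 1 + 𝒩 + 1 + n) / ((α + β + 1 + 2 * n + 1) * (α + β + 1 + 2 * (n + 1))) := by
    rw [coeffC, Nat.cast_succ]
    congr 1 <;> ring
  have cross_mul {X Y p q r : ℝ} (hp : p ≠ 0) (hr : r ≠ 0) :
      X / (p * q) * (p * Y) = Y / (q * r) * (r * X) := by field_simp
  have hAC := h n hn
  rw [hA, hC] at hAC ⊢
  exact cross_mul (left_ne_zero_of_mul (div_ne_zero_iff.1 (left_ne_zero_of_mul hAC)).2)
    (right_ne_zero_of_mul (div_ne_zero_iff.1 (right_ne_zero_of_mul hAC)).2)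

theorem mul_birthDeathWeight_coeff (h : RacahRegular 𝒩 α β δ) {n : ℕ} (hn : n ≤ 𝒩) :
    (α + β + 1) * birthDeathWeight (coeffA 𝒩 α β δ) (coeffC 𝒩 α β δ) n =
      veryWellPoisedTerm (α + β + 1) (α + 1) (β + δ + 1) 𝒩 n := by
  induction n with
  | zero => simp [birthDeathWeight, veryWellPoisedTerm, wellPoisedTerm, poch_zero]
  | succ n ih =>
    have hden {k : ℕ} (hk : k ≤ 2 * 𝒩) := h.natCast_add_ne_zero (by omega) hk
    obtain ⟨-, -, hβ, hαδ⟩ := h.factors_ne_zero hn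
    have hb : 1 + (α + β + 1) - (α + 1) + n ≠ 0 := by convert hβ using 1; ring
    have hc : 1 + (α + β + 1) - (β + δ + 1) + n ≠ 0 := by convert hαδ using 1; ring
    have hx : α + β + 1 + 𝒩 + 1 + n ≠ 0 := by
      convert hden (k := 𝒩 + 1 + n) (by omega) using 1; push_cast; ring
    have ha : α + β + 1 + 2 * n ≠ 0 := by
      convert hden (k := 2 * n) (by omega) using 1; push_cast; ring
    have hC := right_ne_zero_of_mul (h n hn)
    have hprod := mul_ne_zero ha
      (mul_ne_zero (mul_ne_zero (mul_ne_zero (n.cast_add_one_ne_zero (R := ℝ)) hb) hc) hx)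
    refine mul_right_cancel₀ (mul_ne_zero hC hprod) ?_
    rw [mul_left_comm (veryWellPoisedTerm _ _ _ _ _), veryWellPoisedTerm_succ_mul hb hc hx,
      ← ih (Nat.le_of_succ_le hn), mul_left_comm _ (_ * birthDeathWeight _ _ n),
      ← coeffA_mul_eq_coeffC_succ_mul h hn, ← mul_assoc _ (coeffC _ _ _ _ _), mul_assoc (α + β + 1),
      birthDeathWeight_succ_mul _ hC, ← mul_assoc (α + β + 1), ← mul_assoc _ (coeffA _ _ _ _ _)]

theorem kappa_mul_sum_birthDeathWeight (h : RacahRegular 𝒩 α β δ) (hκ : kappa 𝒩 α β δ ≠ 0) :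
    kappa 𝒩 α β δ *
      ∑ n ∈ range (𝒩 + 1), birthDeathWeight (coeffA 𝒩 α β δ) (coeffC 𝒩 α β δ) n = 1 := by
  rcases 𝒩.eq_zero_or_pos with rfl | hN
  · simp [kappa, birthDeathWeight, poch_zero]
  have ha : α + β + 1 ≠ 0 := by simpa using h.natCast_add_ne_zero hN (Nat.zero_le _)
  have hb : 1 + (α + β + 1) - (α + 1) = β + 1 := by ring
  have hc : 1 + (α + β + 1) - (β + δ + 1) = α - δ + 1 := by ring
  have hbc : 1 + (α + β + 1) - (α + 1) - (β + δ + 1) = -δ := by ring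
  have dougall := sum_veryWellPoisedTerm (a := α + β + 1) (b := α + 1) (c := β + δ + 1) (N := 𝒩)
    (fun i hi => by
      convert h.natCast_add_ne_zero hN (k := i + 1) (by omega) using 1; push_cast; ring)
    (fun i hi => by rw [hb]; exact (h.factors_ne_zero hi).2.2.1)
    (fun i hi => by rw [hc]; exact (h.factors_ne_zero hi).2.2.2)
  have hweight : ∀ n ∈ range (𝒩 + 1), veryWellPoisedTerm (α + β + 1) (α + 1) (β + δ + 1) 𝒩 n =
      (α + β + 1) * birthDeathWeight (coeffA 𝒩 α β δ) (coeffC 𝒩 α β δ) n := fun n hn =>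
    (mul_birthDeathWeight_coeff h (mem_range_succ_iff.1 hn)).symm
  rw [sum_congr rfl hweight, ← mul_sum, hbc, hb, hc, poch_succ_left, mul_assoc, mul_div_assoc,
    show α + β + 1 + 1 = α + β + 2 by ring] at dougall
  rw [mul_left_cancel₀ ha dougall, mul_comm (poch (β + 1) 𝒩), kappa,
    div_mul_div_cancel₀ (div_ne_zero_iff.1 hκ).2]
  exact div_self (div_ne_zero_iff.1 hκ).1

theorem sum_birthDeathWeight_mul_racah_eq_zero (h : RacahRegular 𝒩 α β δ)
    (hdual : RacahRegular 𝒩 α (dualBeta 𝒩 α δ) (dualDelta 𝒩 α β)) {m m' : ℕ} (hm : m ≤ 𝒩)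
    (hm' : m' ≤ 𝒩) (hne : m ≠ m') :
    ∑ n ∈ range (𝒩 + 1), birthDeathWeight (coeffA 𝒩 α β δ) (coeffC 𝒩 α β δ) n *
      (racah 𝒩 α β δ n m * racah 𝒩 α β δ n m') = 0 := by
  have hN : 0 < 𝒩 := by omega
  refine sum_birthDeathWeight_mul_eq_zero (by simp [coeffC]) (by simp [coeffA])
    (fun i hi => right_ne_zero_of_mul (h i hi)) (fun n hn => birthDeathOp_racah hN h hn hm)
    (fun n hn => birthDeathOp_racah hN h hn hm') fun heq => ?_
  have hsum : ((m + m' : ℕ) : ℝ) + (δ - 𝒩) ≠ 0 := by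
    convert hdual.natCast_add_ne_zero hN (k := m + m') (by omega) using 1
    unfold dualBeta
    ring
  refine mul_ne_zero (sub_ne_zero.2 (Nat.cast_injective.ne hne)) hsum ?_
  push_cast
  linear_combination heq

theorem sum_Pfun_mul_Pfun (h : PosCond 𝒩 α β δ) (m m' : ℕ) :
    ∑ n ∈ range (𝒩 + 1), Pfun 𝒩 α β δ n m * Pfun 𝒩 α β δ n m' =
      kappa 𝒩 α β δ * (birthDeathRoot (coeffB 𝒩 α β δ) (coeffD 𝒩 α β δ) m *
          birthDeathRoot (coeffB 𝒩 α β δ) (coeffD 𝒩 α β δ) m') *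
        ∑ n ∈ range (𝒩 + 1), birthDeathWeight (coeffA 𝒩 α β δ) (coeffC 𝒩 α β δ) n *
          (racah 𝒩 α β δ n m * racah 𝒩 α β δ n m') := by
  rw [mul_sum]
  refine sum_congr rfl fun n hn => ?_
  have hroot := birthDeathRoot_mul_self fun i (hi : i < n) =>
    h.1 i (hi.trans_le (mem_range_succ_iff.1 hn))
  have hκ := mul_self_sqrt h.2.2.le
  rw [Pfun_eq, Pfun_eq, ← hroot]
  linear_combination (birthDeathRoot (coeffA 𝒩 α β δ) (coeffC 𝒩 α β δ) n *
    birthDeathRoot (coeffA 𝒩 α β δ) (coeffC 𝒩 α β δ) n *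
    (birthDeathRoot (coeffB 𝒩 α β δ) (coeffD 𝒩 α β δ) m *
      birthDeathRoot (coeffB 𝒩 α β δ) (coeffD 𝒩 α β δ) m') *
    (racah 𝒩 α β δ n m * racah 𝒩 α β δ n m')) * hκ

/-- The matrix of the values `𝒫_n(m; α, β, -𝒩-1, δ)`, with rows indexed by the degree `n`. -/
def racahMatrix (𝒩 : ℕ) (α β δ : ℝ) : Matrix (Fin (𝒩 + 1)) (Fin (𝒩 + 1)) ℝ :=
  Matrix.of fun n m => Pfun 𝒩 α β δ n m

theorem racahMatrix_dual (𝒩 : ℕ) (α β δ : ℝ) :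
    racahMatrix 𝒩 α (dualBeta 𝒩 α δ) (dualDelta 𝒩 α β) = (racahMatrix 𝒩 α β δ)ᵀ :=
  Matrix.ext fun m n => Pfun_dual 𝒩 α β δ n.is_le m.is_le

theorem racahMatrix_transpose_mul_self_apply (h : PosCond 𝒩 α β δ) (m m' : Fin (𝒩 + 1)) :
    ((racahMatrix 𝒩 α β δ)ᵀ * racahMatrix 𝒩 α β δ) m m' =
      kappa 𝒩 α β δ * (birthDeathRoot (coeffB 𝒩 α β δ) (coeffD 𝒩 α β δ) m *
          birthDeathRoot (coeffB 𝒩 α β δ) (coeffD 𝒩 α β δ) m') *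
        ∑ n ∈ range (𝒩 + 1), birthDeathWeight (coeffA 𝒩 α β δ) (coeffC 𝒩 α β δ) n *
          (racah 𝒩 α β δ n m * racah 𝒩 α β δ n m') := by
  rw [← sum_Pfun_mul_Pfun h, sum_range]
  rfl

theorem isDiag_racahMatrix_transpose_mul_self (h : PosCond 𝒩 α β δ) :
    ((racahMatrix 𝒩 α β δ)ᵀ * racahMatrix 𝒩 α β δ).IsDiag := fun m m' hne =>
  (racahMatrix_transpose_mul_self_apply h m m').trans <| mul_eq_zero_of_right _ <|
    sum_birthDeathWeight_mul_racah_eq_zero h.racahRegular h.dual.racahRegular m.is_le m'.is_le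
      (Fin.val_injective.ne hne)

theorem racahMatrix_transpose_mul_self_zero_zero (h : PosCond 𝒩 α β δ) :
    ((racahMatrix 𝒩 α β δ)ᵀ * racahMatrix 𝒩 α β δ) 0 0 = 1 := by
  rw [racahMatrix_transpose_mul_self_apply h]
  simpa [racah_zero_right, birthDeathRoot_zero] using
    kappa_mul_sum_birthDeathWeight h.racahRegular h.2.2.ne'

theorem racahMatrix_apply_zero_ne_zero (h : PosCond 𝒩 α β δ) (n : Fin (𝒩 + 1)) :
    racahMatrix 𝒩 α β δ n 0 ≠ 0 := by
  have hroot := birthDeathRoot_ne_zero fun i (hi : i < n) => h.1 i (hi.trans_le n.is_le)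
  simp [racahMatrix, Pfun_eq, racah_zero_right, birthDeathRoot_zero, (sqrt_pos.2 h.2.2).ne', hroot]

end Racah

/-! ### Orthogonal matrices -/

section OrthogonalMatrix

variable {ι κ : Type*} [Fintype ι] [DecidableEq ι] [Fintype κ] [DecidableEq κ]

/- If `M Mᵀ = diag r` and `Mᵀ M = diag c`, then `diag r * M = M * diag c`, i.e.
`r i * M i j = M i j * c j`. -/
theorem mem_orthogonalGroup_of_isDiag {M : Matrix ι ι ℝ} (hrow : (M * Mᵀ).IsDiag)
    (hcol : (Mᵀ * M).IsDiag) {j : ι} (hj : (Mᵀ * M) j j = 1) (hne : ∀ i, M i j ≠ 0) :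
    M ∈ Matrix.orthogonalGroup ι ℝ := by
  have commute : Matrix.diagonal (M * Mᵀ).diag * M = M * Matrix.diagonal (Mᵀ * M).diag := by
    rw [hrow.diagonal_diag, hcol.diagonal_diag, Matrix.mul_assoc]
  have rowNorm (i : ι) : (M * Mᵀ) i i = 1 := by
    have hij := congrFun₂ commute i j
    rw [Matrix.diagonal_mul, Matrix.mul_diagonal, Matrix.diag_apply, Matrix.diag_apply, hj,
      mul_comm] at hij
    exact mul_left_cancel₀ (hne i) hij
  rw [Matrix.mem_orthogonalGroup_iff, ← hrow.diagonal_diag, ← Matrix.diagonal_one]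
  exact congrArg Matrix.diagonal (funext rowNorm)

theorem transpose_mem_orthogonalGroup {M : Matrix ι ι ℝ} (hM : M ∈ Matrix.orthogonalGroup ι ℝ) :
    Mᵀ ∈ Matrix.orthogonalGroup ι ℝ := by
  rwa [Matrix.mem_orthogonalGroup_iff, Matrix.transpose_transpose,
    ← Matrix.mem_orthogonalGroup_iff']

theorem submatrix_mem_orthogonalGroup {M : Matrix ι ι ℝ} (hM : M ∈ Matrix.orthogonalGroup ι ℝ)
    (e : κ ≃ ι) : M.submatrix e e ∈ Matrix.orthogonalGroup κ ℝ := by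
  rw [Matrix.mem_orthogonalGroup_iff] at hM ⊢
  rw [Matrix.transpose_submatrix, Matrix.submatrix_mul_equiv, hM, Matrix.submatrix_one_equiv]

theorem diagonal_mem_orthogonalGroup {d : ι → ℝ} (hd : ∀ i, d i * d i = 1) :
    Matrix.diagonal d ∈ Matrix.orthogonalGroup ι ℝ := by
  rw [Matrix.mem_orthogonalGroup_iff, Matrix.diagonal_transpose, Matrix.diagonal_mul_diagonal,
    funext hd, ← Matrix.diagonal_one]

theorem blockDiagonal'_mem_orthogonalGroup {σ : ι → Type*} [∀ i, Fintype (σ i)]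
    [∀ i, DecidableEq (σ i)] {M : ∀ i, Matrix (σ i) (σ i) ℝ}
    (hM : ∀ i, M i ∈ Matrix.orthogonalGroup (σ i) ℝ) :
    Matrix.blockDiagonal' M ∈ Matrix.orthogonalGroup (Σ i, σ i) ℝ := by
  simp only [Matrix.mem_orthogonalGroup_iff] at hM ⊢
  rw [Matrix.blockDiagonal'_transpose, ← Matrix.blockDiagonal'_mul, funext hM]
  exact Matrix.blockDiagonal'_one

end OrthogonalMatrix

theorem PosCond.racahMatrix_mem_orthogonalGroup {𝒩 : ℕ} {α β δ : ℝ} (h : PosCond 𝒩 α β δ) :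
    racahMatrix 𝒩 α β δ ∈ Matrix.orthogonalGroup (Fin (𝒩 + 1)) ℝ := by
  have hrow := isDiag_racahMatrix_transpose_mul_self h.dual
  rw [racahMatrix_dual, Matrix.transpose_transpose] at hrow
  exact mem_orthogonalGroup_of_isDiag hrow (isDiag_racahMatrix_transpose_mul_self h)
    (racahMatrix_transpose_mul_self_zero_zero h) (racahMatrix_apply_zero_ne_zero h)

/-! ### Block-diagonal matrices on the triangle -/

/-- The index set `{(i, j) : i + j ≤ N}` of the Griffiths functions. -/
abbrev Triangle (N : ℕ) : Type := Σ i : Fin (N + 1), Fin (N - i + 1)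

namespace Triangle

variable {N : ℕ}

/-- The point `(i, j)` of the triangle. -/
def mk {i j : ℕ} (h : i + j ≤ N) : Triangle N := ⟨⟨i, by omega⟩, ⟨j, by simp only; omega⟩⟩

theorem mk_inj {i j i' j' : ℕ} {h : i + j ≤ N} {h' : i' + j' ≤ N} :
    mk h = mk h' ↔ i = i' ∧ j = j' := by
  refine ⟨fun heq => ?_, by rintro ⟨rfl, rfl⟩; rfl⟩
  have h₁ := congrArg (fun p : Triangle N => (p.1 : ℕ)) heq
  have h₂ := congrArg (fun p : Triangle N => (p.2 : ℕ)) heq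
  exact ⟨h₁, h₂⟩

theorem add_le (p : Triangle N) : (p.1 : ℕ) + p.2 ≤ N := by
  have := p.1.is_le
  have := p.2.is_le
  omega

/-- The reflection `(i, j) ↦ (j, i)` of the triangle. -/
def swap : Triangle N ≃ Triangle N where
  toFun p := mk ((add_comm _ _).trans_le p.add_le)
  invFun p := mk ((add_comm _ _).trans_le p.add_le)

theorem sum_eq (F : ℕ → ℕ → ℝ) :
    ∑ p : Triangle N, F p.1 p.2 = ∑ i ∈ range (N + 1), ∑ j ∈ range (N + 1 - i), F i j := by
  rw [Fintype.sum_sigma, sum_range]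
  refine sum_congr rfl fun i _ => ?_
  rw [Nat.sub_add_comm i.is_le, sum_range]

end Triangle

section Slice

variable {N : ℕ}

/-- The matrix acting on each slice `{(k, j) : j ≤ N - k}` of the triangle by `P k`. -/
def sliceMatrix (N : ℕ) (P : ℕ → ℕ → ℕ → ℝ) : Matrix (Triangle N) (Triangle N) ℝ :=
  Matrix.of fun p q => if (p.1 : ℕ) = q.1 then P p.1 p.2 q.2 else 0

theorem sliceMatrix_eq_blockDiagonal' (P : ℕ → ℕ → ℕ → ℝ) :
    sliceMatrix N P = Matrix.blockDiagonal' fun k : Fin (N + 1) =>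
      Matrix.of fun i j : Fin (N - k + 1) => P k i j := by
  ext ⟨k, i⟩ ⟨l, j⟩
  by_cases hkl : k = l
  · subst hkl
    simp [sliceMatrix]
  · simp [sliceMatrix, Matrix.blockDiagonal'_apply_ne _ _ _ hkl, Fin.val_injective.ne hkl]

theorem sliceMatrix_mem_orthogonalGroup {P : ℕ → ℕ → ℕ → ℝ}
    (hP : ∀ k : Fin (N + 1), (Matrix.of fun i j : Fin (N - k + 1) => P k i j) ∈
      Matrix.orthogonalGroup (Fin (N - k + 1)) ℝ) :
    sliceMatrix N P ∈ Matrix.orthogonalGroup (Triangle N) ℝ := by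
  rw [sliceMatrix_eq_blockDiagonal']
  exact blockDiagonal'_mem_orthogonalGroup hP

theorem submatrix_swap_mul_sliceMatrix_apply (P Q : ℕ → ℕ → ℕ → ℝ) (p q : Triangle N) :
    ((sliceMatrix N P).submatrix Triangle.swap Triangle.swap * sliceMatrix N Q) p q =
      if (q.1 : ℕ) + p.2 ≤ N then P p.2 p.1 q.1 * Q q.1 p.2 q.2 else 0 := by
  calc
    _ = ∑ t : Triangle N, (if (p.2 : ℕ) = t.2 then P p.2 p.1 t.1 else 0) *
          if (t.1 : ℕ) = q.1 then Q t.1 t.2 q.2 else 0 := rfl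
    _ = ∑ a ∈ range (N + 1), if a = q.1 then
          if (p.2 : ℕ) ∈ range (N + 1 - a) then P p.2 p.1 a * Q a p.2 q.2 else 0 else 0 := by
      rw [Triangle.sum_eq fun a n => (if (p.2 : ℕ) = n then P p.2 p.1 a else 0) *
        if a = q.1 then Q a n q.2 else 0]
      refine sum_congr rfl fun a _ => ?_
      split_ifs <;> simp_all
    _ = _ := by
      rw [sum_ite_eq', if_pos (mem_range.2 q.1.is_lt)]
      refine if_congr ?_ rfl rfl
      grind

theorem submatrix_swap_mul_sliceMatrix_mul_transpose_apply
    (P Q R : ℕ → ℕ → ℕ → ℝ) (p q : Triangle N) :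
    ((sliceMatrix N P).submatrix Triangle.swap Triangle.swap * sliceMatrix N Q *
        ((sliceMatrix N R).submatrix Triangle.swap Triangle.swap)ᵀ) p q =
      ∑ a ∈ range (min (N - p.2) (N - q.2) + 1),
        P p.2 p.1 a * Q a p.2 q.2 * R q.2 q.1 a := by
  have hp := p.add_le
  have hq := q.add_le
  calc
    _ = ∑ t : Triangle N, (if (t.1 : ℕ) + p.2 ≤ N then P p.2 p.1 t.1 * Q t.1 p.2 t.2 else 0) *
          if (q.2 : ℕ) = t.2 then R q.2 q.1 t.1 else 0 := by
      rw [Matrix.mul_apply]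
      simp only [submatrix_swap_mul_sliceMatrix_apply]
      rfl
    _ = ∑ a ∈ range (N + 1), if a + (p.2 : ℕ) ≤ N then if (q.2 : ℕ) ∈ range (N + 1 - a) then
          P p.2 p.1 a * Q a p.2 q.2 * R q.2 q.1 a else 0 else 0 := by
      rw [Triangle.sum_eq fun a m => (if a + (p.2 : ℕ) ≤ N then P p.2 p.1 a * Q a p.2 m else 0) *
        if (q.2 : ℕ) = m then R q.2 q.1 a else 0]
      refine sum_congr rfl fun a _ => ?_
      split_ifs <;> simp_all
    _ = _ := by
      simp only [← ite_and, ← sum_filter]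
      refine sum_congr ?_ fun _ _ => rfl
      grind

end Slice

/-! ### The Griffiths matrix -/

/-- The values `𝒢_{n₁,n₂}(m₁,m₂)` as a matrix with rows `(n₁, n₂)` and columns `(m₁, m₂)`. -/
def griffithsMatrix (j0 j1 j2 j3 j4 : ℝ) (N : ℕ) : Matrix (Triangle N) (Triangle N) ℝ :=
  Matrix.of fun p q => Griffiths j0 j1 j2 j3 j4 N p.1 p.2 q.1 q.2

theorem griffithsMatrix_eq_mul (j0 j1 j2 j3 j4 : ℝ) (N : ℕ) :
    griffithsMatrix j0 j1 j2 j3 j4 N =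
      (sliceMatrix N fun n₂ => Pfun (N - n₂) (-2*j2 - 1) (-2*j1 - 1)
          (N - n₂ - 2*j2 + 2*j3 + 1)).submatrix Triangle.swap Triangle.swap *
        (sliceMatrix N fun a n₂ m₂ => Pfun (N - a) (-2*j0 - 1) (-2*j4 - 1)
          (N - a - 2*j0 - 2*j1 - 1) n₂ m₂ * (-1) ^ (a + m₂)) *
        ((sliceMatrix N fun m₂ => Pfun (N - m₂) (-2*j2 - 1) (-2*j4 - 1)
          (N - m₂ - 2*j2 + 2*j3 + 1)).submatrix Triangle.swap Triangle.swap)ᵀ := by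
  ext p q
  rw [submatrix_swap_mul_sliceMatrix_mul_transpose_apply, griffithsMatrix, Matrix.of_apply,
    Griffiths]
  refine sum_congr rfl fun a _ => ?_
  ring

theorem griffithsMatrix_mem_orthogonalGroup {j0 j1 j2 j3 j4 : ℝ} {N : ℕ}
    (hpos1 : ∀ n2 : ℕ, n2 ≤ N →
      PosCond (N - n2) (-2*j2 - 1) (-2*j1 - 1) ((N : ℝ) - n2 - 2*j2 + 2*j3 + 1))
    (hpos2 : ∀ a : ℕ, a ≤ N →
      PosCond (N - a) (-2*j0 - 1) (-2*j4 - 1) ((N : ℝ) - a - 2*j0 - 2*j1 - 1))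
    (hpos3 : ∀ m2 : ℕ, m2 ≤ N →
      PosCond (N - m2) (-2*j2 - 1) (-2*j4 - 1) ((N : ℝ) - m2 - 2*j2 + 2*j3 + 1)) :
    griffithsMatrix j0 j1 j2 j3 j4 N ∈ Matrix.orthogonalGroup (Triangle N) ℝ := by
  rw [griffithsMatrix_eq_mul]
  refine mul_mem (mul_mem (submatrix_mem_orthogonalGroup ?_ _) ?_)
    (transpose_mem_orthogonalGroup (submatrix_mem_orthogonalGroup ?_ _))
  · exact sliceMatrix_mem_orthogonalGroup fun n₂ =>
      (hpos1 n₂ n₂.is_le).racahMatrix_mem_orthogonalGroup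
  · refine sliceMatrix_mem_orthogonalGroup fun a => ?_
    have hsign := diagonal_mem_orthogonalGroup fun m : Fin (N - a + 1) =>
      pow_mul_pow_eq_one (a + m : ℕ) (show (-1 : ℝ) * -1 = 1 by norm_num)
    convert mul_mem (hpos2 a a.is_le).racahMatrix_mem_orthogonalGroup hsign using 1
    ext n m
    rw [Matrix.mul_diagonal]
    rfl
  · exact sliceMatrix_mem_orthogonalGroup fun m₂ =>
      (hpos3 m₂ m₂.is_le).racahMatrix_mem_orthogonalGroup

theorem sum_triangle_mul_of_mul_transpose_eq_one {N : ℕ} {F : ℕ → ℕ → ℕ → ℕ → ℝ}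
    (hF : (Matrix.of fun p q : Triangle N => F p.1 p.2 q.1 q.2) *
      (Matrix.of fun p q : Triangle N => F p.1 p.2 q.1 q.2)ᵀ = 1)
    {i j i' j' : ℕ} (h : i + j ≤ N) (h' : i' + j' ≤ N) :
    ∑ k ∈ range (N + 1), ∑ l ∈ range (N + 1 - k), F i j k l * F i' j' k l =
      if i = i' ∧ j = j' then 1 else 0 := by
  rw [← Triangle.sum_eq fun k l => F i j k l * F i' j' k l]
  refine (congrFun₂ hF (Triangle.mk h) (Triangle.mk h')).trans ?_
  rw [Matrix.one_apply]
  exact if_congr Triangle.mk_inj rfl rfl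

theorem stmt19_general (j0 j1 j2 j3 j4 : ℝ) (N : ℕ)
    (hpos1 : ∀ n2 : ℕ, n2 ≤ N →
      PosCond (N - n2) (-2*j2 - 1) (-2*j1 - 1) ((N : ℝ) - n2 - 2*j2 + 2*j3 + 1))
    (hpos2 : ∀ a : ℕ, a ≤ N →
      PosCond (N - a) (-2*j0 - 1) (-2*j4 - 1) ((N : ℝ) - a - 2*j0 - 2*j1 - 1))
    (hpos3 : ∀ m2 : ℕ, m2 ≤ N →
      PosCond (N - m2) (-2*j2 - 1) (-2*j4 - 1) ((N : ℝ) - m2 - 2*j2 + 2*j3 + 1)) :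
    (∀ n1 n2 n1' n2' : ℕ, n1 + n2 ≤ N → n1' + n2' ≤ N →
      (∑ m1 ∈ Finset.range (N + 1), ∑ m2 ∈ Finset.range (N + 1 - m1),
        Griffiths j0 j1 j2 j3 j4 N n1 n2 m1 m2 * Griffiths j0 j1 j2 j3 j4 N n1' n2' m1 m2)
        = if n1 = n1' ∧ n2 = n2' then 1 else 0) ∧
    (∀ m1 m2 m1' m2' : ℕ, m1 + m2 ≤ N → m1' + m2' ≤ N →
      (∑ n1 ∈ Finset.range (N + 1), ∑ n2 ∈ Finset.range (N + 1 - n1),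
        Griffiths j0 j1 j2 j3 j4 N n1 n2 m1 m2 * Griffiths j0 j1 j2 j3 j4 N n1 n2 m1' m2')
        = if m1 = m1' ∧ m2 = m2' then 1 else 0) := by
  have horth := griffithsMatrix_mem_orthogonalGroup hpos1 hpos2 hpos3
  have hrows := (Matrix.mem_orthogonalGroup_iff _ _).1 horth
  have hcols := (Matrix.mem_orthogonalGroup_iff' _ _).1 horth
  exact ⟨fun _ _ _ _ hle hle' => sum_triangle_mul_of_mul_transpose_eq_one hrows hle hle',
    fun _ _ _ _ hle hle' => sum_triangle_mul_of_mul_transpose_eq_one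
      (F := fun m1 m2 n1 n2 => Griffiths j0 j1 j2 j3 j4 N n1 n2 m1 m2) hcols hle hle'⟩

/-- Unitarity of the Griffiths–Racah functions. -/
theorem stmt19 (j0 j1 j2 j3 j4 : ℝ) (N : ℕ)
    (h12 : j1 ≥ j2) (h24 : j2 ≥ j4) (h04 : j0 ≥ j4)
    (h0 : j0 ≥ 0) (h1 : j1 ≥ 0) (h2 : j2 ≥ 0) (h3 : j3 ≥ 0) (h4 : j4 ≥ 0)
    (hup : j1 + j2 + j0 + j4 ≥ j3) (hlow : j3 ≥ j1 + j2 + j0 - j4)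
    (hN : 0 < N) (hNdef : (N : ℝ) = j1 + j2 - j3 + j4 + j0)
    (hpos1 : ∀ n2 : ℕ, n2 ≤ N →
      PosCond (N - n2) (-2*j2 - 1) (-2*j1 - 1) ((N : ℝ) - n2 - 2*j2 + 2*j3 + 1))
    (hpos2 : ∀ a : ℕ, a ≤ N →
      PosCond (N - a) (-2*j0 - 1) (-2*j4 - 1) ((N : ℝ) - a - 2*j0 - 2*j1 - 1))
    (hpos3 : ∀ m2 : ℕ, m2 ≤ N →
      PosCond (N - m2) (-2*j2 - 1) (-2*j4 - 1) ((N : ℝ) - m2 - 2*j2 + 2*j3 + 1)) :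
    (∀ n1 n2 n1' n2' : ℕ, n1 + n2 ≤ N → n1' + n2' ≤ N →
      (∑ m1 ∈ Finset.range (N + 1), ∑ m2 ∈ Finset.range (N + 1 - m1),
        Griffiths j0 j1 j2 j3 j4 N n1 n2 m1 m2 * Griffiths j0 j1 j2 j3 j4 N n1' n2' m1 m2)
        = if n1 = n1' ∧ n2 = n2' then 1 else 0) ∧
    (∀ m1 m2 m1' m2' : ℕ, m1 + m2 ≤ N → m1' + m2' ≤ N →
      (∑ n1 ∈ Finset.range (N + 1), ∑ n2 ∈ Finset.range (N + 1 - n1),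
        Griffiths j0 j1 j2 j3 j4 N n1 n2 m1 m2 * Griffiths j0 j1 j2 j3 j4 N n1 n2 m1' m2')
        = if m1 = m1' ∧ m2 = m2' then 1 else 0) := by
  exact stmt19_general j0 j1 j2 j3 j4 N hpos1 hpos2 hpos3
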